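/- Gil-Pelaez inversion: if G is a real random variable with characteristic function Ψ_G and the distribution of G has no atom at g, then the CDF satisfies F_G(g) = 1/2 − (1/π) ∫₀^∞ Im(e^{−iωg} Ψ_G(ω))/ω dω. -/

import Mathlib

open MeasureTheory ProbabilityTheory Complex Real

lemma gp_laplace_sin (s x : ℝ) (hs : 0 < s) :
    ∫ w in Set.Ioi (0 : ℝ), Real.exp (-s * w) * Real.sin (w * x) = x / (s ^ 2 + x ^ 2) := by
  have ha : ((-s : ℂ) + x * Complex.I).re < 0 := by simpa using hs
  have h := integral_exp_mul_complex_Ioi ha 0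
  have hi := integrableOn_exp_mul_complex_Ioi ha 0
  have h2 := congrArg Complex.im h
  rw [← RCLike.im_eq_complex_im, ← integral_im hi] at h2
  have h3 : ∀ w : ℝ, RCLike.im (Complex.exp (((-s : ℂ) + x * Complex.I) * w))
      = Real.exp (-s * w) * Real.sin (w * x) := by
    intro w
    simp [Complex.exp_im, mul_comm]
  simp only [h3] at h2
  rw [h2]
  have : s ^ 2 + x ^ 2 ≠ 0 := by positivity
  simp [Complex.div_im, Complex.normSq_apply]
  field_simp

lemma gp_int_arctan (a b x : ℝ) (ha : 0 < a) (hab : a ≤ b) :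
    ∫ s in Set.Ioc a b, x / (s ^ 2 + x ^ 2) = Real.arctan (b / x) - Real.arctan (a / x) := by
  rw [← intervalIntegral.integral_of_le hab]
  have hpos : ∀ s ∈ Set.uIcc a b, 0 < s := by
    intro s hs
    rw [Set.uIcc_of_le hab] at hs
    exact ha.trans_le hs.1
  apply intervalIntegral.integral_eq_sub_of_hasDerivAt (f := fun s => Real.arctan (s / x))
  · intro s hs
    have hs0 := hpos s hs
    have := ((hasDerivAt_id s).div_const x).arctan
    refine HasDerivAt.congr_deriv (f := fun s => Real.arctan (s / x)) this ?_
    rcases eq_or_ne x 0 with rfl | hx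
    · simp
    · simp only [id]
      field_simp
      ring
  · apply ContinuousOn.intervalIntegrable
    apply ContinuousOn.div (by fun_prop) (by fun_prop)
    intro s hs
    have := hpos s hs
    positivity

lemma gp_int_exp (a b w : ℝ) (hab : a ≤ b) (hw : 0 < w) :
    ∫ s in Set.Ioc a b, Real.exp (-s * w) = (Real.exp (-a * w) - Real.exp (-b * w)) / w := by
  rw [← intervalIntegral.integral_of_le hab]
  rw [intervalIntegral.integral_eq_sub_of_hasDerivAt (f := fun s => - Real.exp (-s * w) / w)]
  · ring
  · intro s _
    have := ((((hasDerivAt_id s).neg.mul_const w).exp).neg).div_const w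
    refine HasDerivAt.congr_deriv (f := fun s => - Real.exp (-s * w) / w) this ?_
    simp
    field_simp
  · exact Continuous.intervalIntegrable (by fun_prop) _ _

lemma gp_prod_int (a b : ℝ) (ha : 0 < a) (f : ℝ → ℝ) (hf : Measurable f)
    (hb : ∀ w, |f w| ≤ 1) :
    Integrable (Function.uncurry fun w s : ℝ => Real.exp (-s * w) * f w)
      ((volume.restrict (Set.Ioi (0 : ℝ))).prod (volume.restrict (Set.Ioc a b))) := by
  have h1 : Integrable (fun w : ℝ => Real.exp (-a * w)) (volume.restrict (Set.Ioi (0 : ℝ))) :=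
    exp_neg_integrableOn_Ioi 0 ha
  have h2 : Integrable (fun _ : ℝ => (1 : ℝ)) (volume.restrict (Set.Ioc a b)) :=
    integrable_const _
  refine (h1.mul_prod h2).mono' ?_ ?_
  · apply Measurable.aestronglyMeasurable
    unfold Function.uncurry
    fun_prop
  · rw [Measure.prod_restrict]
    filter_upwards [ae_restrict_mem (measurableSet_Ioi.prod measurableSet_Ioc)] with p hp
    obtain ⟨hp1, hp2⟩ := hp
    simp only [Function.uncurry, norm_mul, Real.norm_eq_abs, Real.abs_exp, mul_one]
    have : Real.exp (-p.2 * p.1) ≤ Real.exp (-a * p.1) := by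
      apply Real.exp_le_exp.2
      have := hp2.1
      have h0 : (0 : ℝ) < p.1 := hp1
      nlinarith
    calc _ ≤ Real.exp (-a * p.1) * 1 := by
          gcongr
          exact hb _
      _ = _ := mul_one _

lemma gp_kernel (a b x : ℝ) (ha : 0 < a) (hab : a ≤ b) :
    ∫ w in Set.Ioi (0 : ℝ), (Real.exp (-a * w) - Real.exp (-b * w)) / w * Real.sin (w * x)
      = Real.arctan (b / x) - Real.arctan (a / x) := by
  rw [← gp_int_arctan a b x ha hab]
  have hsw := integral_integral_swap (gp_prod_int a b ha (fun w => Real.sin (w * x))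
    (by fun_prop) (fun w => Real.abs_sin_le_one _))
  calc _ = ∫ w in Set.Ioi (0 : ℝ), ∫ s in Set.Ioc a b, Real.exp (-s * w) * Real.sin (w * x) := by
        apply setIntegral_congr_fun measurableSet_Ioi
        intro w hw
        simp only
        rw [integral_mul_const, gp_int_exp a b w hab hw]
    _ = _ := hsw
    _ = _ := by
        apply setIntegral_congr_fun measurableSet_Ioc
        intro s hs
        exact gp_laplace_sin s x (ha.trans hs.1)

lemma gp_kernel_int (a b : ℝ) (ha : 0 < a) (hab : a ≤ b) :
    IntegrableOn (fun w : ℝ => (Real.exp (-a * w) - Real.exp (-b * w)) / w)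
      (Set.Ioi (0 : ℝ)) := by
  have h := (gp_prod_int a b ha (fun _ => 1) (by fun_prop) (by simp)).integral_prod_left
  refine h.congr ?_
  filter_upwards [ae_restrict_mem measurableSet_Ioi] with w hw
  simp only [Function.uncurry, mul_one]
  exact gp_int_exp a b w hab hw

lemma gp_fubini {Ω : Type*} [MeasurableSpace Ω] (P : Measure Ω)
    [IsProbabilityMeasure P] (X : Ω → ℝ) (hX : Measurable X) (a b : ℝ) (ha : 0 < a)
    (hab : a ≤ b) :
    ∫ w in Set.Ioi (0 : ℝ), (Real.exp (-a * w) - Real.exp (-b * w)) *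
        ((∫ t, Real.sin (w * X t) ∂P) / w)
      = ∫ t, (Real.arctan (b / X t) - Real.arctan (a / X t)) ∂P := by
  have hint : Integrable (Function.uncurry fun (w : ℝ) (t : Ω) =>
      (Real.exp (-a * w) - Real.exp (-b * w)) / w * Real.sin (w * X t))
      ((volume.restrict (Set.Ioi (0 : ℝ))).prod P) := by
    refine ((gp_kernel_int a b ha hab).mul_prod (integrable_const (1 : ℝ) (μ := P))).mono ?_ ?_
    · apply Measurable.aestronglyMeasurable
      unfold Function.uncurry
      fun_prop
    · refine Filter.Eventually.of_forall fun p => ?_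
      simp only [Function.uncurry, norm_mul]
      gcongr
      simpa using Real.abs_sin_le_one _
  have hsw := integral_integral_swap hint
  simp only [gp_kernel a b _ ha hab] at hsw
  rw [← hsw]
  congr 1
  ext w
  rw [integral_const_mul]
  ring

lemma gp_lim_arctan (x : ℝ) (hx : x ≠ 0) :
    Filter.Tendsto (fun n : ℕ => Real.arctan (((n : ℝ) + 1) / x)
      - Real.arctan (1 / ((n : ℝ) + 1) / x)) Filter.atTop
      (nhds (if x ≤ 0 then - (π / 2) else π / 2)) := by
  have h0 : Filter.Tendsto (fun n : ℕ => Real.arctan (1 / ((n : ℝ) + 1) / x)) Filter.atTop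
      (nhds 0) := by
    have := (tendsto_one_div_add_atTop_nhds_zero_nat (𝕜 := ℝ)).div_const x
    have := (Real.continuous_arctan.tendsto _).comp this
    simpa [Function.comp_def] using this
  have h1 : Filter.Tendsto (fun n : ℕ => (n : ℝ) + 1) Filter.atTop Filter.atTop :=
    Filter.tendsto_atTop_add_const_right _ _ tendsto_natCast_atTop_atTop
  split_ifs with h
  · have hx' : x < 0 := lt_of_le_of_ne h hx
    have h2 := (Real.tendsto_arctan_atBot.mono_right nhdsWithin_le_nhds).comp
      (h1.atTop_div_const_of_neg hx')
    simpa using h2.sub h0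
  · have hx' : 0 < x := not_le.1 h
    have h2 := (Real.tendsto_arctan_atTop.mono_right nhdsWithin_le_nhds).comp
      (h1.atTop_div_const hx')
    simpa using h2.sub h0

lemma gp_main {Ω : Type*} [MeasurableSpace Ω] (P : Measure Ω)
    [IsProbabilityMeasure P] (X : Ω → ℝ) (hX : Measurable X)
    (h0 : ∀ᵐ t ∂P, X t ≠ 0)
    (hint : IntegrableOn (fun w : ℝ => (∫ t, Real.sin (w * X t) ∂P) / w) (Set.Ioi (0 : ℝ))) :
    ∫ w in Set.Ioi (0 : ℝ), (∫ t, Real.sin (w * X t) ∂P) / w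
      = ∫ t, (if X t ≤ 0 then - (π / 2) else π / 2) ∂P := by
  have hn : ∀ n : ℕ, (0 : ℝ) < 1 / ((n : ℝ) + 1) := fun n => by positivity
  have hn1 : ∀ n : ℕ, 1 / ((n : ℝ) + 1) ≤ (n : ℝ) + 1 := fun n => by
    have h : (0 : ℝ) ≤ n := by positivity
    rw [div_le_iff₀ (by positivity)]
    nlinarith
  have hn0 : ∀ n : ℕ, (0 : ℝ) < (n : ℝ) + 1 := fun n => by positivity
  have hL : Filter.Tendsto (fun n : ℕ => ∫ w in Set.Ioi (0 : ℝ),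
      (Real.exp (-(1 / ((n : ℝ) + 1)) * w) - Real.exp (-((n : ℝ) + 1) * w)) *
        ((∫ t, Real.sin (w * X t) ∂P) / w)) Filter.atTop
      (nhds (∫ w in Set.Ioi (0 : ℝ), (∫ t, Real.sin (w * X t) ∂P) / w)) := by
    refine tendsto_integral_of_dominated_convergence _ ?_ hint.norm ?_ ?_
    · intro n
      refine AEStronglyMeasurable.mul ?_ hint.aestronglyMeasurable
      exact Continuous.aestronglyMeasurable (by fun_prop)
    · intro n
      filter_upwards [ae_restrict_mem measurableSet_Ioi] with w hw
      have hw' : (0 : ℝ) < w := hw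
      rw [norm_mul]
      apply mul_le_of_le_one_left (norm_nonneg _)
      rw [Real.norm_eq_abs, abs_le]
      have e1 : Real.exp (-(1 / ((n : ℝ) + 1)) * w) ≤ 1 := by
        apply Real.exp_le_one_iff.2
        have := mul_pos (hn n) hw'
        linarith
      have e2 : Real.exp (-((n : ℝ) + 1) * w) ≤ 1 := by
        apply Real.exp_le_one_iff.2
        have := mul_pos (hn0 n) hw'
        linarith
      have := Real.exp_pos (-(1 / ((n : ℝ) + 1)) * w)
      have := Real.exp_pos (-((n : ℝ) + 1) * w)
      constructor <;> linarith
    · filter_upwards [ae_restrict_mem measurableSet_Ioi] with w hw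
      have hw' : (0 : ℝ) < w := hw
      have t1 : Filter.Tendsto (fun n : ℕ => Real.exp (-(1 / ((n : ℝ) + 1)) * w)) Filter.atTop
          (nhds 1) := by
        have := ((tendsto_one_div_add_atTop_nhds_zero_nat (𝕜 := ℝ)).neg.mul_const w)
        have := (Real.continuous_exp.tendsto _).comp this
        simpa [Function.comp_def] using this
      have t2 : Filter.Tendsto (fun n : ℕ => Real.exp (-((n : ℝ) + 1) * w)) Filter.atTop
          (nhds 0) := by
        have h1 : Filter.Tendsto (fun n : ℕ => (n : ℝ) + 1) Filter.atTop Filter.atTop :=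
          Filter.tendsto_atTop_add_const_right _ _ tendsto_natCast_atTop_atTop
        have := Real.tendsto_exp_neg_atTop_nhds_zero.comp (h1.atTop_mul_const hw')
        simpa only [Function.comp_def, neg_mul] using this
      have := (t1.sub t2).mul_const ((∫ t, Real.sin (w * X t) ∂P) / w)
      simpa only [sub_zero, one_mul] using this
  have hR : Filter.Tendsto (fun n : ℕ => ∫ t, (Real.arctan (((n : ℝ) + 1) / X t)
      - Real.arctan (1 / ((n : ℝ) + 1) / X t)) ∂P) Filter.atTop
      (nhds (∫ t, (if X t ≤ 0 then - (π / 2) else π / 2) ∂P)) := by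
    refine tendsto_integral_of_dominated_convergence (fun _ => π) ?_ (integrable_const _) ?_ ?_
    · intro n
      apply Measurable.aestronglyMeasurable
      fun_prop
    · intro n
      refine Filter.Eventually.of_forall fun t => ?_
      rw [Real.norm_eq_abs, abs_le]
      have := Real.arctan_lt_pi_div_two (((n : ℝ) + 1) / X t)
      have := Real.neg_pi_div_two_lt_arctan (((n : ℝ) + 1) / X t)
      have := Real.arctan_lt_pi_div_two (1 / ((n : ℝ) + 1) / X t)
      have := Real.neg_pi_div_two_lt_arctan (1 / ((n : ℝ) + 1) / X t)
      constructor <;> linarith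
    · filter_upwards [h0] with t ht
      exact gp_lim_arctan _ ht
  refine tendsto_nhds_unique hL ?_
  simp only [gp_fubini P X hX _ _ (hn _) (hn1 _)]
  exact hR


/-- Gil-Pelaez inversion formula: if `G` is a real random variable with
characteristic function `Ψ_G`, whose distribution has no atom at `g`, and the
inversion integrand is integrable on `(0, ∞)`, then
`F_G(g) = 1/2 − (1/π) ∫₀^∞ Im(e^{−iωg}Ψ_G(ω))/ω dω`. -/
theorem gil_pelaez_inversion {Ω : Type*} [MeasurableSpace Ω] (P : Measure Ω)
    [IsProbabilityMeasure P] (G : Ω → ℝ) (hG : Measurable G) (g : ℝ)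
    (hnoatom : P {ω | G ω = g} = 0)
    (Ψ : ℝ → ℂ) (hΨ : Ψ = fun w : ℝ => ∫ t, Complex.exp (Complex.I * (w : ℂ) * G t) ∂P)
    (hint : IntegrableOn
      (fun w : ℝ => (Complex.exp (-Complex.I * (w : ℂ) * g) * Ψ w).im / w)
      (Set.Ioi (0 : ℝ)) volume) :
    (P {ω | G ω ≤ g}).toReal
      = 1 / 2 - (1 / π) *
        ∫ w in Set.Ioi (0 : ℝ), (Complex.exp (-Complex.I * (w : ℂ) * g) * Ψ w).im / w := by
  have hS : MeasurableSet {ω | G ω ≤ g} := measurableSet_le hG measurable_const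
  have key : ∀ w : ℝ, (Complex.exp (-Complex.I * (w : ℂ) * g) * Ψ w).im
      = ∫ t, Real.sin (w * (G t - g)) ∂P := by
    intro w
    have hi : Integrable (fun t => Complex.exp (-Complex.I * (w : ℂ) * g) *
        Complex.exp (Complex.I * (w : ℂ) * G t)) P := by
      refine (integrable_const (1 : ℝ)).mono' ?_ ?_
      · apply Measurable.aestronglyMeasurable
        fun_prop
      · refine Filter.Eventually.of_forall fun t => ?_
        simp [Complex.norm_exp]
    rw [hΨ]
    simp only
    rw [← integral_const_mul, ← RCLike.im_eq_complex_im, ← integral_im hi]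
    congr 1
    ext t
    rw [← Complex.exp_add]
    have : -Complex.I * (w : ℂ) * g + Complex.I * (w : ℂ) * G t
        = ((w * (G t - g) : ℝ) : ℂ) * Complex.I := by
      push_cast
      ring
    rw [this]
    exact Complex.exp_ofReal_mul_I_im _
  simp only [key] at hint ⊢
  have h0 : ∀ᵐ t ∂P, G t - g ≠ 0 := by
    rw [ae_iff]
    simpa [sub_eq_zero] using hnoatom
  rw [gp_main P (fun t => G t - g) (by fun_prop) h0 hint]
  have e : ∀ t, (if G t - g ≤ 0 then - (π / 2) else π / 2)
      = π / 2 - Set.indicator {ω | G ω ≤ g} (fun _ => π) t := by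
    intro t
    by_cases h : G t ≤ g
    · simp [Set.indicator, h]
      ring
    · simp [Set.indicator, h]
  simp only [e]
  rw [integral_sub (integrable_const _) ((integrable_const _).indicator hS),
    integral_indicator hS]
  simp [Measure.real]
  field_simp
  ring
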